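/- For each positive integer n, the sum over all binary trees T with n vertices of the product over all vertices v of T of 1/(h_v · 2^{h_v - 1}) equals 1/n!, where h_v denotes the hook length of v. In symbols: ∑_{T ∈ B(n)} ∏_{v ∈ T} 1/(h_v 2^{h_v-1}) = 1/n!. -/

import Mathlib

/-- A binary tree: `nil` is the empty tree, and a vertex may have an empty or
nonempty left subtree and an empty or nonempty right subtree.  The binary
trees with `n` vertices are the `T : BinTree` with `T.size = n`. -/
inductive BinTree : Type where
  | nil : BinTree
  | node (l r : BinTree) : BinTree
deriving DecidableEq

/-- The number of vertices of a binary tree. -/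
def BinTree.size : BinTree → ℕ
  | .nil => 0
  | .node l r => l.size + r.size + 1

/-- The product, over all vertices `v` of a binary tree, of `f h_v`, where
`h_v` is the hook length of `v` (the number of descendants of `v`, including
`v` itself, i.e. the size of the subtree rooted at `v`). -/
def BinTree.hookProd (f : ℕ → ℝ) : BinTree → ℝ
  | .nil => 1
  | .node l r => f (l.size + r.size + 1) * l.hookProd f * r.hookProd f

/-!
Deleting the root of a nonempty tree leaves an ordered pair of trees, and the root contributes
only its hook length, the size of the tree. Hence `a n = ∑_{T ∈ B(n)} ∏_v f h_v` is determined by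
`a 0 = 1` and `a (n + 1) = f (n + 1) * ∑_{i + j = n} a i * a j`. With
`f h = 1 / (h * 2 ^ (h - 1))` it is solved by `a n = 1 / n!`, because
`∑_{i + j = n} 1 / (i! j!) = 2 ^ n / n!` by the binomial theorem.
-/

open Finset.HasAntidiagonal

theorem sum_antidiagonal_pow_div_factorial_mul {K : Type*} [Field K] [CharZero K]
    (x y : K) (n : ℕ) :
    ∑ p ∈ antidiagonal n,
      x ^ p.1 / (p.1.factorial : K) * (y ^ p.2 / (p.2.factorial : K)) =
      (x + y) ^ n / (n.factorial : K) := by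
  rw [(Commute.all x y).add_pow', Finset.sum_div]
  refine Finset.sum_congr rfl fun ⟨i, j⟩ hij => ?_
  obtain rfl : i + j = n := mem_antidiagonal.mp hij
  have factorial_ne_zero : ((i + j).factorial : K) ≠ 0 :=
    Nat.cast_ne_zero.mpr (i + j).factorial_ne_zero
  rw [nsmul_eq_mul, Nat.cast_add_choose]
  field_simp

namespace BinTree

/-- The set `B(n)` of binary trees with `n` vertices, as a subtype. -/
abbrev OfSize (n : ℕ) : Type := {T : BinTree // T.size = n}

instance uniqueOfSizeZero : Unique (OfSize 0) where
  default := ⟨nil, rfl⟩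
  uniq
    | ⟨nil, _⟩ => rfl

/-- The decomposition of a nonempty binary tree at its root: the pairs of trees with `n` vertices
in total, sorted by their sizes, correspond to the trees with `n + 1` vertices. -/
def nodeEquiv (n : ℕ) :
    (Σ p : antidiagonal n, OfSize p.1.1 × OfSize p.1.2) ≃ OfSize (n + 1) where
  toFun
    | ⟨⟨_, hp⟩, ⟨l, hl⟩, ⟨r, hr⟩⟩ =>
      ⟨node l r, by rw [size, hl, hr, mem_antidiagonal.mp hp]⟩
  invFun
    | ⟨node l r, h⟩ =>
      ⟨⟨(l.size, r.size), mem_antidiagonal.mpr (Nat.succ.inj h)⟩, ⟨l, rfl⟩, ⟨r, rfl⟩⟩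
  left_inv
    | ⟨⟨(_, _), _⟩, ⟨_, rfl⟩, ⟨_, rfl⟩⟩ => rfl
  right_inv
    | ⟨node _ _, _⟩ => rfl

instance finite_ofSize (n : ℕ) : Finite (OfSize n) := by
  induction n using Nat.strong_induction_on with
  | _ n ih =>
    cases n with
    | zero => infer_instance
    | succ n =>
      have finite_pair (p : antidiagonal n) : Finite (OfSize p.1.1 × OfSize p.1.2) :=
        have := ih p.1.1 (Nat.lt_succ_of_le (antidiagonal.fst_le p.2))
        have := ih p.1.2 (Nat.lt_succ_of_le (antidiagonal.snd_le p.2))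
        inferInstance
      exact Finite.of_equiv _ (nodeEquiv n)

noncomputable instance fintypeOfSize (n : ℕ) : Fintype (OfSize n) := Fintype.ofFinite _

/-- The sum over the binary trees with `n` vertices of the product of the weights `f h_v` of the
hook lengths of their vertices. -/
noncomputable def hookSum (f : ℕ → ℝ) (n : ℕ) : ℝ :=
  ∑ T : OfSize n, T.1.hookProd f

section hookSum

variable (f : ℕ → ℝ)

theorem hookProd_nodeEquiv {n : ℕ} (p : antidiagonal n)
    (l : OfSize p.1.1) (r : OfSize p.1.2) :
    (nodeEquiv n ⟨p, l, r⟩).1.hookProd f = f (n + 1) * (l.1.hookProd f * r.1.hookProd f) := by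
  have size_add : l.1.size + r.1.size = n := by
    rw [l.2, r.2, mem_antidiagonal.mp p.2]
  change f (l.1.size + r.1.size + 1) * l.1.hookProd f * r.1.hookProd f = _
  rw [size_add, mul_assoc]

theorem hookSum_zero : hookSum f 0 = 1 :=
  Fintype.sum_unique _

theorem hookSum_succ (n : ℕ) :
    hookSum f (n + 1) =
      f (n + 1) * ∑ p ∈ antidiagonal n, hookSum f p.1 * hookSum f p.2 := by
  calc hookSum f (n + 1)
      = ∑ x, (nodeEquiv n x).1.hookProd f := ((nodeEquiv n).sum_comp _).symm
    _ = ∑ p : antidiagonal n, ∑ l : OfSize p.1.1, ∑ r : OfSize p.1.2,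
          f (n + 1) * (l.1.hookProd f * r.1.hookProd f) := by
      simp only [Fintype.sum_sigma, Fintype.sum_prod_type, hookProd_nodeEquiv]
    _ = f (n + 1) * ∑ p : antidiagonal n, hookSum f p.1.1 * hookSum f p.1.2 := by
      simp only [hookSum, ← Finset.mul_sum, ← Finset.sum_mul]
    _ = f (n + 1) * ∑ p ∈ antidiagonal n, hookSum f p.1 * hookSum f p.2 := by
      rw [Finset.sum_coe_sort _ fun p : ℕ × ℕ => hookSum f p.1 * hookSum f p.2]

variable {f} in
theorem hookSum_eq_of_recurrence {a : ℕ → ℝ} (h_zero : a 0 = 1)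
    (h_succ : ∀ n, a (n + 1) = f (n + 1) * ∑ p ∈ antidiagonal n, a p.1 * a p.2) (n : ℕ) :
    hookSum f n = a n := by
  induction n using Nat.strong_induction_on with
  | _ n ih =>
    cases n with
    | zero => rw [hookSum_zero, h_zero]
    | succ n =>
      rw [hookSum_succ, h_succ]
      congr 1
      refine Finset.sum_congr rfl fun p hp => ?_
      rw [ih p.1 (Nat.lt_succ_of_le (antidiagonal.fst_le hp)),
        ih p.2 (Nat.lt_succ_of_le (antidiagonal.snd_le hp))]

end hookSum

end BinTree

/-- Han's first formula: for every positive integer `n`,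
`∑_{T ∈ B(n)} ∏_{v ∈ T} 1/(h_v 2^{h_v-1}) = 1/n!`. -/
theorem han_hook_length_formula (n : ℕ) (hn : 0 < n) :
    ∑' T : {T : BinTree // T.size = n},
      (T : BinTree).hookProd (fun h => 1 / ((h : ℝ) * 2 ^ (h - 1))) =
      1 / (Nat.factorial n : ℝ) := by
  rw [tsum_fintype]
  refine BinTree.hookSum_eq_of_recurrence (a := fun m => 1 / (m.factorial : ℝ)) (by simp)
    (fun m => ?_) n
  have convolution : ∑ p ∈ antidiagonal m,
      1 / (p.1.factorial : ℝ) * (1 / (p.2.factorial : ℝ)) = 2 ^ m / (m.factorial : ℝ) := by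
    simpa only [one_pow, one_add_one_eq_two] using
      sum_antidiagonal_pow_div_factorial_mul (1 : ℝ) 1 m
  rw [convolution, Nat.factorial_succ, Nat.add_sub_cancel]
  push_cast
  field_simp
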